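/- For all n ≥ 1, t ≥ 0, and 1 ≤ k ≤ n: η(n,k) = η(n, n−k+1) and μ_U(n,t,k) = μ_D(n, t+1, n−k+1). -/

import Mathlib

/-!
Reversal `σ ↦ revP σ` is an involution on permutations that swaps the two orientations of every
separated pair (`upSepPair_revP`, `downSepPair_revP`) and moves the entry `1` from position `k` to
position `n - k + 1` (`onePos_revP`). It therefore preserves the absence of separated pairs, which
gives the identity for `η`, and exchanges up-oriented and down-oriented permutations.

For `μ`, let `M = maxAltLen σ`, which is unchanged by reversal. In an up-oriented `σ` no chain of
length `M` starts with a down pair, but deleting the first pair of a longest chain leaves a chain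
of length `M - 1` which does, so the rev-tier is `M - 1` (`UpOriented.revTier_add_one`). In a
down-oriented permutation the longest chains start with a down pair, so the rev-tier is `M`
(`DownOriented.revTier_eq`). Hence reversal raises the rev-tier of an up-oriented permutation
by exactly one.
-/

/-!  Common definitions: permutation patterns, separated pairs, rev-tier. -/

/-- `π` contains the pattern `σ`. -/
def Pattern.Contains {n k : ℕ} (π : Equiv.Perm (Fin n)) (σ : Equiv.Perm (Fin k)) : Prop :=
  ∃ α : Fin k → Fin n, StrictMono α ∧ ∀ i j : Fin k, (π (α i) < π (α j) ↔ σ i < σ j)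

/-- `π` avoids the pattern `σ`. -/
def Pattern.Avoids {n k : ℕ} (π : Equiv.Perm (Fin n)) (σ : Equiv.Perm (Fin k)) : Prop :=
  ¬ Pattern.Contains π σ

/-- The pair of values `(a, a+1)` (0-indexed) is an up oriented separated pair in `σ`:
`a` precedes `a+1` and some value `> a+1` occurs strictly between them. -/
def UpSepPair {n : ℕ} (σ : Equiv.Perm (Fin n)) (a : Fin n) : Prop :=
  ∃ hb : (a : ℕ) + 1 < n,
    σ.symm a < σ.symm ⟨(a : ℕ) + 1, hb⟩ ∧
    ∃ p : Fin n, σ.symm a < p ∧ p < σ.symm ⟨(a : ℕ) + 1, hb⟩ ∧ (a : ℕ) + 1 < (σ p : ℕ)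

/-- The pair of values `(a, a+1)` (0-indexed) is a down oriented separated pair in `σ`. -/
def DownSepPair {n : ℕ} (σ : Equiv.Perm (Fin n)) (a : Fin n) : Prop :=
  ∃ hb : (a : ℕ) + 1 < n,
    σ.symm ⟨(a : ℕ) + 1, hb⟩ < σ.symm a ∧
    ∃ p : Fin n, σ.symm ⟨(a : ℕ) + 1, hb⟩ < p ∧ p < σ.symm a ∧ (a : ℕ) + 1 < (σ p : ℕ)

/-- `(a, a+1)` is a separated pair (of either orientation). -/
def SepPair {n : ℕ} (σ : Equiv.Perm (Fin n)) (a : Fin n) : Prop :=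
  UpSepPair σ a ∨ DownSepPair σ a

/-- `σ` has no separated pairs. -/
def NoSepPairs {n : ℕ} (σ : Equiv.Perm (Fin n)) : Prop :=
  ∀ a : Fin n, ¬ SepPair σ a

/-- `f` lists the lower values of an increasing sequence of separated pairs in `σ` with
alternating orientations; the first pair is down oriented iff `firstDown = true`. -/
def AltChain {n : ℕ} (σ : Equiv.Perm (Fin n)) (firstDown : Bool) {t : ℕ}
    (f : Fin t → Fin n) : Prop :=
  StrictMono f ∧ ∀ j : Fin t,
    if ((j : ℕ) % 2 = 0) ↔ (firstDown = true) then DownSepPair σ (f j)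
    else UpSepPair σ (f j)

/-- The rev-tier of `σ`: the maximal length of an increasing sequence of separated pairs
with alternating orientations beginning with a down oriented pair. -/
noncomputable def revTier {n : ℕ} (σ : Equiv.Perm (Fin n)) : ℕ :=
  sSup {t : ℕ | ∃ f : Fin t → Fin n, AltChain σ true f}

/-- Maximal length of an increasing alternating sequence of separated pairs (either
starting orientation). -/
noncomputable def maxAltLen {n : ℕ} (σ : Equiv.Perm (Fin n)) : ℕ :=
  sSup {t : ℕ | ∃ b : Bool, ∃ f : Fin t → Fin n, AltChain σ b f}

/-- `σ` has a separated pair and every maximum-length increasing alternating sequence of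
separated pairs begins with an up oriented pair. -/
def UpOriented {n : ℕ} (σ : Equiv.Perm (Fin n)) : Prop :=
  1 ≤ maxAltLen σ ∧ ¬ ∃ f : Fin (maxAltLen σ) → Fin n, AltChain σ true f

/-- `σ` has a separated pair and every maximum-length increasing alternating sequence of
separated pairs begins with a down oriented pair. -/
def DownOriented {n : ℕ} (σ : Equiv.Perm (Fin n)) : Prop :=
  1 ≤ maxAltLen σ ∧ ¬ ∃ f : Fin (maxAltLen σ) → Fin n, AltChain σ false f

/-- `σ` is a basis element of the class of permutations of rev-tier at most `t`. -/
def IsBasisElt (t : ℕ) {n : ℕ} (σ : Equiv.Perm (Fin n)) : Prop :=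
  t + 1 ≤ revTier σ ∧
  ∀ (m : ℕ) (τ : Equiv.Perm (Fin m)), m < n → Pattern.Contains σ τ → revTier τ ≤ t

/-- The entry `1` of `σ` is in (1-indexed) position `k`. -/
def onePos {n : ℕ} (σ : Equiv.Perm (Fin n)) (k : ℕ) : Prop :=
  ∀ h : 0 < n, (σ.symm ⟨0, h⟩ : ℕ) + 1 = k

/-- `η(n,k)`: number of permutations of length `n` with no separated pairs and entry `1`
in position `k`. -/
noncomputable def eta (n k : ℕ) : ℕ :=
  Nat.card {σ : Equiv.Perm (Fin n) // NoSepPairs σ ∧ onePos σ k}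

/-- `η(n)`: number of permutations of length `n` with no separated pairs. -/
noncomputable def etaTot (n : ℕ) : ℕ :=
  Nat.card {σ : Equiv.Perm (Fin n) // NoSepPairs σ}

/-- `μ_U(n,t,k)`: number of up-oriented permutations of length `n`, rev-tier `t`, with
entry `1` in position `k`. -/
noncomputable def muU (n t k : ℕ) : ℕ :=
  Nat.card {σ : Equiv.Perm (Fin n) // UpOriented σ ∧ revTier σ = t ∧ onePos σ k}

/-- `μ_D(n,t,k)`: number of down-oriented permutations of length `n`, rev-tier `t`, with
entry `1` in position `k`. -/
noncomputable def muD (n t k : ℕ) : ℕ :=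
  Nat.card {σ : Equiv.Perm (Fin n) // DownOriented σ ∧ revTier σ = t ∧ onePos σ k}

/-- `π` is a down-up alternating permutation: `π₁ > π₂ < π₃ > ⋯`. -/
def DownUp {n : ℕ} (π : Equiv.Perm (Fin n)) : Prop :=
  ∀ (i : ℕ) (h : i + 1 < n),
    if i % 2 = 0 then π ⟨i + 1, h⟩ < π ⟨i, by omega⟩
    else π ⟨i, by omega⟩ < π ⟨i + 1, h⟩

/-- The Entringer number `E_{n,k}`: down-up alternating permutations of length `n` whose
first entry is `k` (1-indexed value). -/
noncomputable def entringer (n k : ℕ) : ℕ :=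
  Nat.card {π : Equiv.Perm (Fin n) // DownUp π ∧ ∀ h : 0 < n, (π ⟨0, h⟩ : ℕ) + 1 = k}

/-- The reversal of a permutation: `(revP σ) j = σ (n + 1 - j)`. -/
def revP {n : ℕ} (σ : Equiv.Perm (Fin n)) : Equiv.Perm (Fin n) :=
  (Fin.revPerm).trans σ

/-- The explicit maximal rev-tier permutation of length `n` (0-indexed values):
the even entries of `{1,…,n}` in decreasing order, then `n`, then the odd entries in
increasing order. -/
def maxPermVal (n : ℕ) (i : Fin n) : Fin n :=
  if h1 : (i : ℕ) < (n - 1) / 2 then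
    ⟨2 * ((n - 1) / 2) - 2 * (i : ℕ) - 1, by omega⟩
  else if h2 : (i : ℕ) = (n - 1) / 2 then
    ⟨n - 1, by have := i.isLt; omega⟩
  else
    ⟨2 * ((i : ℕ) - (n - 1) / 2 - 1), by have := i.isLt; omega⟩

def p231 : Equiv.Perm (Fin 3) :=
  ⟨![1, 2, 0], ![2, 0, 1], by decide, by decide⟩

def p132 : Equiv.Perm (Fin 3) :=
  ⟨![0, 2, 1], ![0, 2, 1], by decide, by decide⟩

def p2413 : Equiv.Perm (Fin 4) :=
  ⟨![1, 3, 0, 2], ![2, 0, 3, 1], by decide, by decide⟩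

def p2431 : Equiv.Perm (Fin 4) :=
  ⟨![1, 3, 2, 0], ![3, 0, 2, 1], by decide, by decide⟩

def p23154 : Equiv.Perm (Fin 5) :=
  ⟨![1, 2, 0, 4, 3], ![2, 0, 1, 4, 3], by decide, by decide⟩

def p24153 : Equiv.Perm (Fin 5) :=
  ⟨![1, 3, 0, 4, 2], ![2, 0, 4, 1, 3], by decide, by decide⟩

def p24513 : Equiv.Perm (Fin 5) :=
  ⟨![1, 3, 4, 0, 2], ![3, 0, 4, 1, 2], by decide, by decide⟩

def p24531 : Equiv.Perm (Fin 5) :=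
  ⟨![1, 3, 4, 2, 0], ![4, 0, 3, 1, 2], by decide, by decide⟩

def p42513 : Equiv.Perm (Fin 5) :=
  ⟨![3, 1, 4, 0, 2], ![3, 1, 4, 0, 2], by decide, by decide⟩

def p42531 : Equiv.Perm (Fin 5) :=
  ⟨![3, 1, 4, 2, 0], ![4, 1, 3, 0, 2], by decide, by decide⟩

def p231564 : Equiv.Perm (Fin 6) :=
  ⟨![1, 2, 0, 4, 5, 3], ![2, 0, 1, 5, 3, 4], by decide, by decide⟩

def p261453 : Equiv.Perm (Fin 6) :=
  ⟨![1, 5, 0, 3, 4, 2], ![2, 0, 5, 3, 4, 1], by decide, by decide⟩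

def p523164 : Equiv.Perm (Fin 6) :=
  ⟨![4, 1, 2, 0, 5, 3], ![3, 1, 2, 5, 0, 4], by decide, by decide⟩

def p562413 : Equiv.Perm (Fin 6) :=
  ⟨![4, 5, 1, 3, 0, 2], ![4, 2, 5, 3, 0, 1], by decide, by decide⟩

def p562431 : Equiv.Perm (Fin 6) :=
  ⟨![4, 5, 1, 3, 2, 0], ![5, 2, 4, 3, 0, 1], by decide, by decide⟩

def p6723154 : Equiv.Perm (Fin 7) :=
  ⟨![5, 6, 1, 2, 0, 4, 3], ![4, 2, 3, 6, 5, 0, 1], by decide, by decide⟩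

def p4321 : Equiv.Perm (Fin 4) :=
  ⟨![3, 2, 1, 0], ![3, 2, 1, 0], by decide, by decide⟩

def p4213 : Equiv.Perm (Fin 4) :=
  ⟨![3, 1, 0, 2], ![2, 1, 3, 0], by decide, by decide⟩

lemma revP_symm_apply {n : ℕ} (σ : Equiv.Perm (Fin n)) (a : Fin n) :
    (revP σ).symm a = Fin.rev (σ.symm a) := rfl

lemma revP_apply {n : ℕ} (σ : Equiv.Perm (Fin n)) (a : Fin n) :
    revP σ a = σ (Fin.rev a) := rfl

lemma revP_revP {n : ℕ} (σ : Equiv.Perm (Fin n)) : revP (revP σ) = σ := by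
  ext a
  simp [revP_apply]

/-- Reversal as an equivalence of the set of permutations with itself. -/
def revEquiv (n : ℕ) : Equiv.Perm (Fin n) ≃ Equiv.Perm (Fin n) :=
  ⟨revP, revP, revP_revP, revP_revP⟩

lemma upSepPair_revP {n : ℕ} (σ : Equiv.Perm (Fin n)) (a : Fin n) :
    UpSepPair (revP σ) a ↔ DownSepPair σ a := by
  simp only [UpSepPair, DownSepPair, revP_symm_apply, revP_apply, Fin.rev_lt_rev]
  refine exists_congr fun hb => and_congr_right fun _ => ?_
  constructor
  · rintro ⟨p, h1, h2, h3⟩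
    exact ⟨p.rev, Fin.lt_rev_iff.mpr h2, Fin.rev_lt_iff.mpr h1, h3⟩
  · rintro ⟨p, h1, h2, h3⟩
    exact ⟨p.rev, Fin.rev_lt_rev.mpr h2, Fin.rev_lt_rev.mpr h1, by rwa [Fin.rev_rev]⟩

lemma downSepPair_revP {n : ℕ} (σ : Equiv.Perm (Fin n)) (a : Fin n) :
    DownSepPair (revP σ) a ↔ UpSepPair σ a := by
  rw [← upSepPair_revP, revP_revP]

lemma noSepPairs_revP {n : ℕ} (σ : Equiv.Perm (Fin n)) :
    NoSepPairs (revP σ) ↔ NoSepPairs σ := by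
  simp only [NoSepPairs, SepPair, upSepPair_revP, downSepPair_revP, or_comm]

lemma onePos_revP {n k : ℕ} (hn : 1 ≤ n) (hkn : k ≤ n)
    (σ : Equiv.Perm (Fin n)) : onePos (revP σ) (n - k + 1) ↔ onePos σ k := by
  have h0 : 0 < n := hn
  simp only [onePos, revP_symm_apply, Fin.val_rev, h0, forall_true_left]
  have := (σ.symm ⟨0, h0⟩).isLt
  omega

lemma altChain_revP {n t : ℕ} (σ : Equiv.Perm (Fin n)) (b : Bool) (f : Fin t → Fin n) :
    AltChain (revP σ) b f ↔ AltChain σ (!b) f := by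
  refine and_congr_right fun _ => forall_congr' fun j => ?_
  rw [upSepPair_revP, downSepPair_revP]
  by_cases hj : (j : ℕ) % 2 = 0 <;> cases b <;> simp [hj]

lemma maxAltLen_revP {n : ℕ} (σ : Equiv.Perm (Fin n)) :
    maxAltLen (revP σ) = maxAltLen σ := by
  unfold maxAltLen
  congr 1
  ext t
  simp only [Set.mem_ofPred_eq, altChain_revP, Bool.exists_bool, Bool.not_false, Bool.not_true]
  exact or_comm

lemma downOriented_revP {n : ℕ} (σ : Equiv.Perm (Fin n)) :
    DownOriented (revP σ) ↔ UpOriented σ := by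
  simp only [DownOriented, UpOriented, altChain_revP, Bool.not_false]
  rw [maxAltLen_revP]

lemma AltChain.length_le {n t : ℕ} {σ : Equiv.Perm (Fin n)} {b : Bool} {f : Fin t → Fin n}
    (h : AltChain σ b f) : t ≤ n := by
  simpa using Fintype.card_le_of_injective f h.1.injective

/-- Deleting the first pair of an alternating chain flips the initial orientation. -/
lemma AltChain.tail {n t : ℕ} {σ : Equiv.Perm (Fin n)} {b : Bool} {f : Fin (t + 1) → Fin n}
    (h : AltChain σ b f) : AltChain σ (!b) (fun j => f j.succ) := by
  refine ⟨fun i j hij => h.1 (Fin.succ_lt_succ_iff.mpr hij), fun j => ?_⟩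
  have hs := h.2 j.succ
  rw [Fin.val_succ] at hs
  rcases Nat.mod_two_eq_zero_or_one (j : ℕ) with hj | hj
  · have hj' : ((j : ℕ) + 1) % 2 = 1 := by omega
    cases b <;> simpa [hj, hj'] using hs
  · have hj' : ((j : ℕ) + 1) % 2 = 0 := by omega
    cases b <;> simpa [hj, hj'] using hs

lemma AltChain.le_maxAltLen {n t : ℕ} {σ : Equiv.Perm (Fin n)} {b : Bool} {f : Fin t → Fin n}
    (h : AltChain σ b f) : t ≤ maxAltLen σ :=
  le_csSup ⟨n, fun _ ⟨_, _, hg⟩ => hg.length_le⟩ ⟨b, f, h⟩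

lemma AltChain.le_revTier {n t : ℕ} {σ : Equiv.Perm (Fin n)} {f : Fin t → Fin n}
    (h : AltChain σ true f) : t ≤ revTier σ :=
  le_csSup ⟨n, fun _ ⟨_, hg⟩ => hg.length_le⟩ ⟨f, h⟩

lemma altChain_empty {n : ℕ} (σ : Equiv.Perm (Fin n)) (b : Bool) :
    AltChain σ b (Fin.elim0 : Fin 0 → Fin n) :=
  ⟨fun i => i.elim0, fun i => i.elim0⟩

/-- The supremum defining `maxAltLen` is attained. -/
lemma exists_altChain_maxAltLen {n : ℕ} (σ : Equiv.Perm (Fin n)) :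
    ∃ b : Bool, ∃ f : Fin (maxAltLen σ) → Fin n, AltChain σ b f :=
  Nat.sSup_mem (s := {t : ℕ | ∃ b : Bool, ∃ f : Fin t → Fin n, AltChain σ b f})
    ⟨0, true, _, altChain_empty σ true⟩ ⟨n, fun _ ⟨_, _, hg⟩ => hg.length_le⟩

/-- The supremum defining `revTier` is attained. -/
lemma exists_altChain_revTier {n : ℕ} (σ : Equiv.Perm (Fin n)) :
    ∃ f : Fin (revTier σ) → Fin n, AltChain σ true f :=
  Nat.sSup_mem (s := {t : ℕ | ∃ f : Fin t → Fin n, AltChain σ true f})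
    ⟨0, _, altChain_empty σ true⟩ ⟨n, fun _ ⟨_, hg⟩ => hg.length_le⟩

lemma DownOriented.revTier_eq {n : ℕ} {σ : Equiv.Perm (Fin n)} (h : DownOriented σ) :
    revTier σ = maxAltLen σ := by
  obtain ⟨g, hg⟩ := exists_altChain_revTier σ
  obtain ⟨b, f, hf⟩ := exists_altChain_maxAltLen σ
  cases b with
  | false => exact absurd ⟨f, hf⟩ h.2
  | true => exact le_antisymm hg.le_maxAltLen hf.le_revTier

lemma UpOriented.revTier_add_one {n : ℕ} {σ : Equiv.Perm (Fin n)} (h : UpOriented σ) :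
    revTier σ + 1 = maxAltLen σ := by
  obtain ⟨g, hg⟩ := exists_altChain_revTier σ
  obtain ⟨b, f, hf⟩ := exists_altChain_maxAltLen σ
  obtain ⟨hpos, hno⟩ := h
  have hle := hg.le_maxAltLen
  have hne : revTier σ ≠ maxAltLen σ := fun he => hno (he ▸ ⟨g, hg⟩)
  cases b with
  | true => exact absurd ⟨f, hf⟩ hno
  | false =>
    -- `tail` needs the length as a literal successor
    obtain ⟨m, hm⟩ : ∃ m, maxAltLen σ = m + 1 := ⟨maxAltLen σ - 1, by omega⟩
    have hex : ∃ f : Fin (maxAltLen σ) → Fin n, AltChain σ false f := ⟨f, hf⟩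
    rw [hm] at hex
    obtain ⟨f', hf'⟩ := hex
    have := hf'.tail.le_revTier
    omega

/-- `η(n,k) = η(n,n-k+1)` and `μ_U(n,t,k) = μ_D(n,t+1,n-k+1)`. -/
theorem reversal_identities (n t k : ℕ) (hn : 1 ≤ n) (hk : 1 ≤ k) (hkn : k ≤ n) :
    eta n k = eta n (n - k + 1) ∧ muU n t k = muD n (t + 1) (n - k + 1) := by
  constructor
  · exact Nat.card_congr ((revEquiv n).subtypeEquiv fun σ =>
      (and_congr (noSepPairs_revP σ) (onePos_revP hn hkn σ)).symm)
  · refine Nat.card_congr ((revEquiv n).subtypeEquiv fun σ => ?_)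
    change _ ↔ DownOriented (revP σ) ∧ revTier (revP σ) = t + 1 ∧ onePos (revP σ) (n - k + 1)
    rw [onePos_revP hn hkn, downOriented_revP]
    refine and_congr_right fun hU => and_congr_left fun _ => ?_
    have h1 := hU.revTier_add_one
    have h2 := ((downOriented_revP σ).mpr hU).revTier_eq
    rw [maxAltLen_revP] at h2
    omega
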